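/- arXiv:math/0202076 — 2 statements merged into one kernel-verified Lean document; each statement's English description precedes it below -/
import Mathlib

section
/- Let m ≥ n ≥ 1 and let κ₁ ≥ κ₂ ≥ 0 be integers. Let λ be a partition of length at most m+n. If the Littlewood–Richardson coefficient c^λ_{κ₁·1^m, κ₂·1^n} is nonzero, then λ_j + λ_{m+n+1−j} = κ₁ + κ₂ for every j = 1,…,n; λ_{n+j} = κ₁ for every j = 1,…,m−n; and λ_n ≥ κ₁. -/
/-- A partition of length at most `r`, presented as a function on positive
indices: weakly decreasing on indices `≥ 1` and vanishing beyond `r`. -/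
def IsPartitionOfLength (r : ℕ) (lam : ℕ → ℕ) : Prop :=
  (∀ i, 1 ≤ i → lam (i + 1) ≤ lam i) ∧ ∀ i, r < i → lam i = 0

/-- The partition `a·1^k`: first `k` parts equal to `a`, the rest `0`. -/
def onesPart (a k : ℕ) : ℕ → ℕ := fun i => if 1 ≤ i ∧ i ≤ k then a else 0

/-- The box `(i, j)` (row `i ≥ 1`, column `j`) lies in the skew shape `λ ∖ μ`. -/
def InShape (lam mu : ℕ → ℕ) (p : ℕ × ℕ) : Prop :=
  1 ≤ p.1 ∧ mu p.1 < p.2 ∧ p.2 ≤ lam p.1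

/-- The set of boxes read before (and including) position `(i, j)` in the
reading word: boxes in rows above `i`, together with boxes of row `i` in
columns `≥ j` (the reading goes right to left along rows, top row first). -/
def ReadingPrefix (lam mu : ℕ → ℕ) (i j : ℕ) : Set (ℕ × ℕ) :=
  {p | InShape lam mu p ∧ (p.1 < i ∨ (p.1 = i ∧ j ≤ p.2))}

/-- A Littlewood–Richardson tableau of shape `λ ∖ μ` and weight `ν` with
symbols `1, …, s`: a filling of the boxes of `λ ∖ μ` (extended by `0` outside
of the shape) which is weakly increasing along rows, strictly increasing down
columns, uses the symbol `k` exactly `ν k` times, and whose reading word is a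
lattice permutation. -/
def IsLRTableau (lam mu nu : ℕ → ℕ) (s : ℕ) (T : ℕ × ℕ → ℕ) : Prop :=
  (∀ p, InShape lam mu p → 1 ≤ T p ∧ T p ≤ s) ∧
  (∀ p, ¬ InShape lam mu p → T p = 0) ∧
  (∀ i j, InShape lam mu (i, j) → InShape lam mu (i, j + 1) →
    T (i, j) ≤ T (i, j + 1)) ∧
  (∀ i j, InShape lam mu (i, j) → InShape lam mu (i + 1, j) →
    T (i, j) < T (i + 1, j)) ∧
  (∀ k, 1 ≤ k → k ≤ s → {p | InShape lam mu p ∧ T p = k}.ncard = nu k) ∧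
  (∀ i j k, 1 ≤ k →
    {p | p ∈ ReadingPrefix lam mu i j ∧ T p = k + 1}.ncard ≤
      {p | p ∈ ReadingPrefix lam mu i j ∧ T p = k}.ncard)

-- The Littlewood–Richardson coefficient `c^λ_{μν}` (with `ν` regarded as
-- having `s` parts): the number of Littlewood–Richardson tableaux of shape
-- `λ ∖ μ` and weight `ν`, and `0` unless `μ ⊆ λ`.
open Classical in
noncomputable def LRCoeff (lam mu nu : ℕ → ℕ) (s : ℕ) : ℕ :=
  if ∀ i, mu i ≤ lam i then {T : ℕ × ℕ → ℕ | IsLRTableau lam mu nu s T}.ncard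
  else 0

/-!
Let `λ^(k)` be the shape formed by `μ` and the boxes of a Littlewood–Richardson tableau with
symbols at most `k`, let `P_k(i)` be the number of symbols `k` strictly above row `i`, and put
`F_k(i) = λ^(k)_i + P_k(i)`. The column condition says `λ^(k+1)_{i+1} ≤ λ^(k)_i` and makes `F`
decreasing in `i`; the lattice condition says `P_{k+1}(i+1) ≤ P_k(i)` and makes `F` decreasing
in `k`. Letting `i → ∞` gives `ν_k ≤ F_k(i)`, and `k = 1` gives `F_k(i) ≤ μ_i + ν_1`.

If `ν = κ₂·1^n`, then `F_k(i) = κ₂` in every row `i` below `μ`. Comparing `F_k(i)` with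
`F_n(i + n - k)`, both summands decrease while their sum does not, so they agree termwise and
`λ_{i+n-k} + P_k(i) = κ₂`. If moreover `μ = κ₁·1^m`, then `F_k(k) = λ_k` yields
`λ_k = κ₁ + P_k(m + 1)`, and adding the two identities at `i = m + 1` gives the first claim.
The remaining claims follow from `μ_i ≤ λ_i` and `λ_{i+n} ≤ μ_i`.
-/

section RowCounts

open Finset

theorem ncard_setOf_fst_mem_and_snd_mem {α β : Type*} (R : Finset α) (f : α → Finset β) :
    {p : α × β | p.1 ∈ R ∧ p.2 ∈ f p.1}.ncard = ∑ a ∈ R, #(f a) := by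
  rw [← card_sigma, ← card_map (Equiv.sigmaEquivProd α β).toEmbedding, ← Set.ncard_coe_finset]
  congr 1
  ext ⟨a, b⟩
  simp

/-- The columns of the boxes in row `i` of `λ ∖ μ` that carry the symbol `k`. -/
def symbolColumns (lam mu : ℕ → ℕ) (T : ℕ × ℕ → ℕ) (k i : ℕ) : Finset ℕ :=
  {j ∈ Ioc (mu i) (lam i) | T (i, j) = k}

/-- The `i`-th part of the shape `λ^(k)` formed by `μ` and the boxes with symbols at most `k`.
A tableau is encoded by the chain `μ = λ^(0) ⊆ λ^(1) ⊆ ⋯ ⊆ λ^(s) = λ`. -/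
def subshape (lam mu : ℕ → ℕ) (T : ℕ × ℕ → ℕ) (k i : ℕ) : ℕ :=
  mu i + #{j ∈ Ioc (mu i) (lam i) | T (i, j) ≤ k}

/-- The number of symbols `k` strictly above row `i`; rows are numbered from `1`. -/
def countAbove (lam mu : ℕ → ℕ) (T : ℕ × ℕ → ℕ) (k i : ℕ) : ℕ :=
  ∑ r ∈ Ico 1 i, #(symbolColumns lam mu T k r)

/-- The length that row `i` of `λ^(k)` would have if all symbols `k` above it were moved down
into it. The column condition on a tableau makes it decrease in `i`, the lattice condition
in `k`. -/
def potential (lam mu : ℕ → ℕ) (T : ℕ × ℕ → ℕ) (k i : ℕ) : ℕ :=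
  subshape lam mu T k i + countAbove lam mu T k i

variable {lam mu : ℕ → ℕ} {T : ℕ × ℕ → ℕ} {i j k : ℕ}

theorem mem_symbolColumns_iff_inShape (hi : 1 ≤ i) :
    j ∈ symbolColumns lam mu T k i ↔ InShape lam mu (i, j) ∧ T (i, j) = k := by
  simp [symbolColumns, InShape, hi]

theorem subshape_succ (lam mu : ℕ → ℕ) (T : ℕ × ℕ → ℕ) (k i : ℕ) :
    subshape lam mu T (k + 1) i =
      subshape lam mu T k i + #(symbolColumns lam mu T (k + 1) i) := by
  have hdisj : Disjoint {j ∈ Ioc (mu i) (lam i) | T (i, j) ≤ k}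
      {j ∈ Ioc (mu i) (lam i) | T (i, j) = k + 1} :=
    disjoint_filter.2 fun _ _ hle heq ↦ by omega
  simp only [subshape, symbolColumns, Nat.le_succ_iff, filter_or, card_union_of_disjoint hdisj,
    add_assoc]

theorem countAbove_eq_ncard (lam mu : ℕ → ℕ) (T : ℕ × ℕ → ℕ) (k i : ℕ) :
    countAbove lam mu T k i = {p | (InShape lam mu p ∧ p.1 < i) ∧ T p = k}.ncard := by
  rw [countAbove, ← ncard_setOf_fst_mem_and_snd_mem]
  congr 1
  ext ⟨r, c⟩
  simp only [Set.mem_ofPred_eq, mem_Ico]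
  constructor
  · rintro ⟨⟨hr, hri⟩, hc⟩
    have := (mem_symbolColumns_iff_inShape hr).1 hc
    exact ⟨⟨this.1, hri⟩, this.2⟩
  · rintro ⟨⟨hS, hri⟩, hTk⟩
    exact ⟨⟨hS.1, hri⟩, (mem_symbolColumns_iff_inShape hS.1).2 ⟨hS, hTk⟩⟩

theorem countAbove_succ (hi : 1 ≤ i) :
    countAbove lam mu T k (i + 1) =
      countAbove lam mu T k i + #(symbolColumns lam mu T k i) :=
  sum_Ico_succ_top hi _

theorem countAbove_mono (lam mu : ℕ → ℕ) (T : ℕ × ℕ → ℕ) (k : ℕ) :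
    Monotone (countAbove lam mu T k) := fun _ _ h ↦
  sum_le_sum_of_subset (Ico_subset_Ico_right h)

theorem potential_succ (hi : 1 ≤ i) :
    potential lam mu T (k + 1) i =
      subshape lam mu T k i + countAbove lam mu T (k + 1) (i + 1) := by
  rw [potential, subshape_succ, countAbove_succ hi]
  ring

theorem inner_add_countAbove_succ_le_potential (hk : 1 ≤ k) (hi : 1 ≤ i) :
    mu i + countAbove lam mu T k (i + 1) ≤ potential lam mu T k i := by
  obtain ⟨l, rfl⟩ := Nat.exists_eq_add_of_le' hk
  rw [potential_succ hi]
  exact Nat.add_le_add_right (Nat.le_add_right _ _) _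

end RowCounts

theorem IsPartitionOfLength.antitoneOn {r : ℕ} {lam : ℕ → ℕ} (h : IsPartitionOfLength r lam) :
    AntitoneOn lam (Set.Ici 1) :=
  antitoneOn_of_succ_le Set.ordConnected_Ici fun i _ hi _ ↦ h.1 i hi

namespace IsLRTableau

open Finset

variable {lam mu nu : ℕ → ℕ} {s : ℕ} {T : ℕ × ℕ → ℕ} {i j k r : ℕ}

theorem entry_mem_Icc (hT : IsLRTableau lam mu nu s T) (hij : InShape lam mu (i, j)) :
    T (i, j) ∈ Set.Icc 1 s :=
  hT.1 (i, j) hij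

theorem subshape_zero (hT : IsLRTableau lam mu nu s T) (hi : 1 ≤ i) :
    subshape lam mu T 0 i = mu i := by
  have hempty : {j ∈ Ioc (mu i) (lam i) | T (i, j) ≤ 0} = ∅ :=
    filter_eq_empty_iff.2 fun j hj ↦
      not_le.2 (hT.entry_mem_Icc ⟨hi, mem_Ioc.1 hj⟩).1
  rw [subshape, hempty, card_empty, add_zero]

theorem subshape_last (hT : IsLRTableau lam mu nu s T) (hi : 1 ≤ i) (hsub : mu i ≤ lam i) :
    subshape lam mu T s i = lam i := by
  rw [subshape, filter_true_of_mem fun j hj ↦ (hT.entry_mem_Icc ⟨hi, mem_Ioc.1 hj⟩).2,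
    Nat.card_Ioc, Nat.add_sub_cancel' hsub]

theorem row_monotoneOn (hT : IsLRTableau lam mu nu s T) (hi : 1 ≤ i) :
    MonotoneOn (fun j ↦ T (i, j)) (Set.Ioc (mu i) (lam i)) := by
  obtain ⟨-, -, hrow, -⟩ := hT
  exact monotoneOn_of_le_succ Set.ordConnected_Ioc fun j _ hj hj' ↦ hrow i j ⟨hi, hj⟩ ⟨hi, hj'⟩

theorem entry_le_iff_le_subshape (hT : IsLRTableau lam mu nu s T)
    (hij : InShape lam mu (i, j)) : T (i, j) ≤ k ↔ j ≤ subshape lam mu T k i := by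
  obtain ⟨hi, hj⟩ := hij
  have hrow := hT.row_monotoneOn hi
  constructor
  · intro hle
    have hsub : Ioc (mu i) j ⊆ {c ∈ Ioc (mu i) (lam i) | T (i, c) ≤ k} := fun c hc ↦ by
      have hc' := mem_Ioc.1 hc
      have hcI : c ∈ Set.Ioc (mu i) (lam i) := ⟨hc'.1, hc'.2.trans hj.2⟩
      exact mem_filter.2 ⟨mem_Ioc.2 hcI, (hrow hcI hj hc'.2).trans hle⟩
    have hcard := card_le_card hsub
    rw [Nat.card_Ioc] at hcard
    exact Nat.sub_le_iff_le_add'.1 hcard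
  · contrapose!
    intro hlt
    have hsub : {c ∈ Ioc (mu i) (lam i) | T (i, c) ≤ k} ⊆ Ioo (mu i) j := fun c hc ↦ by
      obtain ⟨hcI, hck⟩ := mem_filter.1 hc
      refine mem_Ioo.2 ⟨(mem_Ioc.1 hcI).1, lt_of_not_ge fun hjc ↦ ?_⟩
      exact absurd (hrow hj (mem_Ioc.1 hcI) hjc) (not_le.2 (hck.trans_lt hlt))
    have hcard := card_le_card hsub
    have hmu : mu i < j := hj.1
    rw [Nat.card_Ioo] at hcard
    rw [subshape]
    omega

theorem subshape_succ_succ_le (hT : IsLRTableau lam mu nu s T) (hi : 1 ≤ i)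
    (hlam : lam (i + 1) ≤ lam i) (hmu : mu (i + 1) ≤ mu i) :
    subshape lam mu T (k + 1) (i + 1) ≤ subshape lam mu T k i := by
  obtain ⟨-, -, -, hcol, -⟩ := hT
  have hsub : {j ∈ Ioc (mu (i + 1)) (lam (i + 1)) | T (i + 1, j) ≤ k + 1} ⊆
      Ioc (mu (i + 1)) (mu i) ∪ {j ∈ Ioc (mu i) (lam i) | T (i, j) ≤ k} := fun j hj ↦ by
    simp only [mem_filter, mem_union, mem_Ioc] at hj ⊢
    rcases le_or_gt j (mu i) with hjmu | hjmu
    · exact Or.inl ⟨hj.1.1, hjmu⟩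
    · have hlam' : j ≤ lam i := hj.1.2.trans hlam
      have hlt := hcol i j ⟨hi, hjmu, hlam'⟩ ⟨by omega, hj.1⟩
      exact Or.inr ⟨⟨hjmu, hlam'⟩, by omega⟩
  have hcard := (card_le_card hsub).trans (card_union_le _ _)
  rw [Nat.card_Ioc] at hcard
  simp only [subshape]
  omega

theorem subshape_add_le (hT : IsLRTableau lam mu nu s T) (hlam : AntitoneOn lam (Set.Ici 1))
    (hmu : AntitoneOn mu (Set.Ici 1)) (hi : 1 ≤ i) (d : ℕ) :
    subshape lam mu T (k + d) (i + d) ≤ subshape lam mu T k i := by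
  induction d with
  | zero => rfl
  | succ d ih =>
    have hid : 1 ≤ i + d := Nat.le_add_right_of_le hi
    have hid' : 1 ≤ i + d + 1 := Nat.le_add_left _ _
    exact (hT.subshape_succ_succ_le hid (hlam hid hid' (Nat.le_succ _))
      (hmu hid hid' (Nat.le_succ _))).trans ih

theorem subshape_add_le_inner (hT : IsLRTableau lam mu nu s T)
    (hlam : AntitoneOn lam (Set.Ici 1)) (hmu : AntitoneOn mu (Set.Ici 1)) (hi : 1 ≤ i) (k : ℕ) :
    subshape lam mu T k (i + k) ≤ mu i := by
  have h := hT.subshape_add_le hlam hmu (k := 0) hi k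
  rwa [zero_add, hT.subshape_zero hi] at h

theorem countAbove_succ_succ_le (hT : IsLRTableau lam mu nu s T) (hk : 1 ≤ k) (i : ℕ) :
    countAbove lam mu T (k + 1) (i + 1) ≤ countAbove lam mu T k i := by
  -- In row `i` the prefix starts right after the symbols at most `k`: it contains all the
  -- symbols `k + 1` of that row and none of its symbols `k`.
  have ⟨_, _, _, _, _, hlattice⟩ := hT
  specialize hlattice i (subshape lam mu T k i + 1) k hk
  rw [countAbove_eq_ncard, countAbove_eq_ncard]
  convert hlattice using 2
  all_goals
    ext ⟨r, c⟩
    simp only [ReadingPrefix, Set.mem_ofPred_eq]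
    refine and_congr_left fun hTk ↦ and_congr_right fun hS ↦ ?_
    have hle : r = i → (T (r, c) ≤ k ↔ c ≤ subshape lam mu T k i) := by
      rintro rfl
      exact hT.entry_le_iff_le_subshape hS
    omega

theorem countAbove_add_le (hT : IsLRTableau lam mu nu s T) (hk : 1 ≤ k) (i d : ℕ) :
    countAbove lam mu T (k + d) (i + d) ≤ countAbove lam mu T k i := by
  induction d with
  | zero => rfl
  | succ d ih => exact (hT.countAbove_succ_succ_le (Nat.le_add_right_of_le hk) _).trans ih

theorem countAbove_eq_weight (hT : IsLRTableau lam mu nu s T) (hlam : ∀ i, r < i → lam i = 0)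
    (hk : 1 ≤ k) (hks : k ≤ s) (hi : r < i) : countAbove lam mu T k i = nu k := by
  obtain ⟨-, -, -, -, hweight, -⟩ := hT
  rw [countAbove_eq_ncard, ← hweight k hk hks]
  congr 1
  ext ⟨a, c⟩
  refine and_congr_left fun _ ↦ and_iff_left_of_imp fun ⟨_, hmu, hc⟩ ↦ lt_of_not_ge fun hia ↦ ?_
  have := hlam a (hi.trans_le hia)
  simp only at hmu hc
  omega

theorem countAbove_le_weight (hT : IsLRTableau lam mu nu s T) (hlam : ∀ i, r < i → lam i = 0)
    (hk : 1 ≤ k) (hks : k ≤ s) (i : ℕ) : countAbove lam mu T k i ≤ nu k := by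
  rw [← hT.countAbove_eq_weight hlam hk hks (le_max_right i (r + 1))]
  exact countAbove_mono _ _ _ _ (le_max_left _ _)

theorem countAbove_eq_zero_of_le (hT : IsLRTableau lam mu nu s T) (hk : 1 ≤ k) (hik : i ≤ k) :
    countAbove lam mu T k i = 0 := by
  obtain ⟨d, rfl⟩ := Nat.exists_eq_add_of_le hik
  rcases i with _ | i
  · rfl
  · have h := hT.countAbove_add_le (k := 1 + d) (by omega) 1 i
    rw [add_right_comm, add_comm 1 i] at h
    exact Nat.le_zero.1 h

theorem subshape_eq_subshape_self_of_le (hT : IsLRTableau lam mu nu s T) (hi : 1 ≤ i)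
    (hik : i ≤ k) : subshape lam mu T k i = subshape lam mu T i i := by
  induction k, hik using Nat.le_induction with
  | base => rfl
  | succ k hik ih =>
    have h := hT.countAbove_eq_zero_of_le (Nat.le_add_left 1 k) (Nat.succ_le_succ hik)
    rw [countAbove_succ hi] at h
    rw [subshape_succ, ih]
    omega

theorem potential_self (hT : IsLRTableau lam mu nu s T) (hk : 1 ≤ k) (hks : k ≤ s)
    (hsub : mu k ≤ lam k) : potential lam mu T k k = lam k := by
  rw [potential, hT.countAbove_eq_zero_of_le hk le_rfl, add_zero,
    ← hT.subshape_eq_subshape_self_of_le hk hks, hT.subshape_last hk hsub]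

theorem potential_antitoneOn_row (hT : IsLRTableau lam mu nu s T)
    (hlam : AntitoneOn lam (Set.Ici 1)) (hmu : AntitoneOn mu (Set.Ici 1)) (hk : 1 ≤ k) :
    AntitoneOn (potential lam mu T k) (Set.Ici 1) := by
  obtain ⟨l, rfl⟩ := Nat.exists_eq_add_of_le' hk
  refine antitoneOn_of_succ_le Set.ordConnected_Ici fun i _ hi hi' ↦ ?_
  rw [potential_succ hi]
  exact Nat.add_le_add_right (hT.subshape_succ_succ_le hi (hlam hi hi' (Order.le_succ i))
    (hmu hi hi' (Order.le_succ i))) _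

theorem potential_antitoneOn_symbol (hT : IsLRTableau lam mu nu s T) (hi : 1 ≤ i) :
    AntitoneOn (fun k ↦ potential lam mu T k i) (Set.Ici 1) :=
  antitoneOn_of_succ_le Set.ordConnected_Ici fun k _ hk _ ↦ by
    simp only [Order.succ_eq_add_one, potential_succ hi]
    exact Nat.add_le_add_left (hT.countAbove_succ_succ_le hk i) _

theorem weight_le_potential (hT : IsLRTableau lam mu nu s T) (hlam : IsPartitionOfLength r lam)
    (hmu : AntitoneOn mu (Set.Ici 1)) (hk : 1 ≤ k) (hks : k ≤ s) (hi : 1 ≤ i) :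
    nu k ≤ potential lam mu T k i :=
  calc nu k = countAbove lam mu T k (i + r) :=
        (hT.countAbove_eq_weight hlam.2 hk hks (by omega)).symm
    _ ≤ potential lam mu T k (i + r) := Nat.le_add_left _ _
    _ ≤ potential lam mu T k i := hT.potential_antitoneOn_row hlam.antitoneOn hmu hk hi
        (Set.mem_Ici.2 (by omega)) (Nat.le_add_right _ _)

theorem potential_le_inner_add_weight_one (hT : IsLRTableau lam mu nu s T)
    (hlam : ∀ i, r < i → lam i = 0) (hk : 1 ≤ k) (hs : 1 ≤ s) (hi : 1 ≤ i) :
    potential lam mu T k i ≤ mu i + nu 1 :=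
  calc potential lam mu T k i
      ≤ potential lam mu T 1 i := hT.potential_antitoneOn_symbol hi Set.self_mem_Ici hk hk
    _ = mu i + countAbove lam mu T 1 (i + 1) := by rw [potential_succ hi, hT.subshape_zero hi]
    _ ≤ mu i + nu 1 := Nat.add_le_add_left (hT.countAbove_le_weight hlam le_rfl hs _) _

theorem outer_le_inner_one_add_countAbove (hT : IsLRTableau lam mu nu s T)
    (hlam : AntitoneOn lam (Set.Ici 1)) (hmu : AntitoneOn mu (Set.Ici 1)) (hk : 1 ≤ k)
    (hks : k ≤ s) (hsub : mu k ≤ lam k) (hki : k < i) :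
    lam k ≤ mu 1 + countAbove lam mu T k i := by
  rw [← hT.potential_self hk hks hsub]
  obtain ⟨l, rfl⟩ := Nat.exists_eq_add_of_le' hk
  have hrow := hT.subshape_add_le_inner hlam hmu le_rfl l
  rw [add_comm 1 l] at hrow
  rw [potential_succ hk]
  exact Nat.add_le_add hrow (countAbove_mono _ _ _ _ hki)

theorem inner_add_countAbove_succ_le_outer (hT : IsLRTableau lam mu nu s T)
    (hlam : AntitoneOn lam (Set.Ici 1)) (hmu : AntitoneOn mu (Set.Ici 1)) (hk : 1 ≤ k)
    (hks : k ≤ s) (hsub : mu k ≤ lam k) (hki : k ≤ i) :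
    mu i + countAbove lam mu T k (i + 1) ≤ lam k :=
  calc mu i + countAbove lam mu T k (i + 1)
      ≤ potential lam mu T k i := inner_add_countAbove_succ_le_potential hk (hk.trans hki)
    _ ≤ potential lam mu T k k :=
        hT.potential_antitoneOn_row hlam hmu hk hk (hk.trans hki) hki
    _ = lam k := hT.potential_self hk hks hsub

theorem potential_eq_of_rectangular_weight (hT : IsLRTableau lam mu nu s T)
    (hlam : IsPartitionOfLength r lam) (hmu : AntitoneOn mu (Set.Ici 1)) (hnu : nu k = nu 1)
    (hk : 1 ≤ k) (hks : k ≤ s) (hi : 1 ≤ i) (hmui : mu i = 0) :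
    potential lam mu T k i = nu 1 := by
  refine le_antisymm ?_ (hnu ▸ hT.weight_le_potential hlam hmu hk hks hi)
  have h := hT.potential_le_inner_add_weight_one hlam.2 hk (hk.trans hks) hi
  rwa [hmui, zero_add] at h

theorem outer_add_countAbove_of_rectangular_weight (hT : IsLRTableau lam mu nu s T)
    (hlam : IsPartitionOfLength r lam) (hmu : AntitoneOn mu (Set.Ici 1))
    (hnu : ∀ k, 1 ≤ k → k ≤ s → nu k = nu 1) (hk : 1 ≤ k) (hks : k ≤ s) (hi : 1 ≤ i)
    (hmui : mu i = 0) :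
    lam (i + (s - k)) + countAbove lam mu T k i = nu 1 := by
  obtain ⟨d, rfl⟩ := Nat.exists_eq_add_of_le hks
  rw [Nat.add_sub_cancel_left]
  have hid : 1 ≤ i + d := Nat.le_add_right_of_le hi
  have hmuid : mu (i + d) = 0 := Nat.le_zero.1 (hmui ▸ hmu hi hid (Nat.le_add_right i d))
  have htop := hT.potential_eq_of_rectangular_weight hlam hmu (hnu k hk hks) hk hks hi hmui
  have hbot := hT.potential_eq_of_rectangular_weight hlam hmu (hnu (k + d) (by omega) le_rfl)
    (by omega) le_rfl hid hmuid
  have hshape := hT.subshape_add_le hlam.antitoneOn hmu (k := k) hi d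
  have hcount := hT.countAbove_add_le hk i d
  have hlast := hT.subshape_last hid (by omega)
  simp only [potential] at htop hbot
  omega

end IsLRTableau

theorem onesPart_eq {a k i : ℕ} (hi : 1 ≤ i) (hik : i ≤ k) : onesPart a k i = a :=
  if_pos ⟨hi, hik⟩

theorem onesPart_le (a k i : ℕ) : onesPart a k i ≤ a := by
  unfold onesPart
  split_ifs <;> omega

theorem isPartitionOfLength_onesPart (a k : ℕ) : IsPartitionOfLength k (onesPart a k) := by
  constructor <;> intro i hi <;> unfold onesPart <;> split_ifs <;> omega

theorem inner_le_and_exists_isLRTableau_of_lrCoeff_ne_zero {lam mu nu : ℕ → ℕ} {s : ℕ}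
    (h : LRCoeff lam mu nu s ≠ 0) :
    (∀ i, mu i ≤ lam i) ∧ ∃ T, IsLRTableau lam mu nu s T := by
  classical
  rw [LRCoeff, ite_ne_right_iff] at h
  exact ⟨h.1, Set.nonempty_of_ncard_ne_zero h.2⟩

theorem lr_nonzero_implies_shape_general {m n κ₁ κ₂ r : ℕ} (hn : 1 ≤ n) (hmn : n ≤ m)
    {lam : ℕ → ℕ} (hlam : IsPartitionOfLength r lam)
    (hne : LRCoeff lam (onesPart κ₁ m) (onesPart κ₂ n) n ≠ 0) :
    (∀ j, 1 ≤ j → j ≤ n → lam j + lam (m + n + 1 - j) = κ₁ + κ₂) ∧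
    (∀ j, 1 ≤ j → j ≤ m - n → lam (n + j) = κ₁) ∧
    κ₁ ≤ lam n := by
  obtain ⟨hsub, T, hT⟩ := inner_le_and_exists_isLRTableau_of_lrCoeff_ne_zero hne
  have hmu := isPartitionOfLength_onesPart κ₁ m
  have hle : ∀ i, 1 ≤ i → i ≤ m → κ₁ ≤ lam i := fun i hi him ↦
    (onesPart_eq hi him).ge.trans (hsub i)
  refine ⟨fun j hj hjn ↦ ?_, fun j hj hjmn ↦ ?_, hle n hn hmn⟩
  · have hupper := hT.outer_le_inner_one_add_countAbove hlam.antitoneOn hmu.antitoneOn hj hjn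
      (hsub j) (i := m + 1) (by omega)
    have hlower := hT.inner_add_countAbove_succ_le_outer hlam.antitoneOn hmu.antitoneOn hj hjn
      (hsub j) (hjn.trans hmn)
    have htail := hT.outer_add_countAbove_of_rectangular_weight hlam hmu.antitoneOn
      (fun k hk hkn ↦ (onesPart_eq hk hkn).trans (onesPart_eq le_rfl hn).symm) hj hjn
      (Nat.le_add_left 1 m) (hmu.2 _ (Nat.lt_succ_self m))
    rw [onesPart_eq le_rfl (hn.trans hmn)] at hupper
    rw [onesPart_eq (hn.trans hmn) le_rfl] at hlower
    rw [onesPart_eq le_rfl hn, show m + 1 + (n - j) = m + n + 1 - j by omega] at htail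
    omega
  · have hrow := hT.subshape_add_le_inner hlam.antitoneOn hmu.antitoneOn hj n
    rw [add_comm, hT.subshape_last (Nat.le_add_right_of_le hn) (hsub _)] at hrow
    exact le_antisymm (hrow.trans (onesPart_le _ _ _)) (hle _ (by omega) (by omega))

/-- If `m ≥ n ≥ 1`, `κ₁ ≥ κ₂ ≥ 0` and the Littlewood–Richardson coefficient
`c^λ_{κ₁·1^m, κ₂·1^n}` is nonzero, then `λ_j + λ_{m+n+1−j} = κ₁ + κ₂` for
`j = 1, …, n`, `λ_{n+j} = κ₁` for `j = 1, …, m−n`, and `λ_n ≥ κ₁`. -/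
theorem lr_nonzero_implies_shape (m n κ₁ κ₂ : ℕ) (hn : 1 ≤ n) (hmn : n ≤ m)
    (hκ : κ₂ ≤ κ₁) (lam : ℕ → ℕ) (hlam : IsPartitionOfLength (m + n) lam)
    (hne : LRCoeff lam (onesPart κ₁ m) (onesPart κ₂ n) n ≠ 0) :
    (∀ j, 1 ≤ j → j ≤ n → lam j + lam (m + n + 1 - j) = κ₁ + κ₂) ∧
    (∀ j, 1 ≤ j → j ≤ m - n → lam (n + j) = κ₁) ∧
    κ₁ ≤ lam n :=
  lr_nonzero_implies_shape_general hn hmn hlam hne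
end

section
/- Let m ≥ n ≥ 1 and let κ₁ ≥ κ₂ ≥ 0 be integers. Let λ be a partition of length at most m+n satisfying: λ_j + λ_{m+n+1−j} = κ₁ + κ₂ for j = 1,…,n; λ_{n+j} = κ₁ for j = 1,…,m−n; and λ_n ≥ κ₁. Then the Littlewood–Richardson coefficient c^λ_{κ₁·1^m, κ₂·1^n} equals 1. -/
/-!
Under the hypotheses on `λ`, the shape `λ ∖ κ₁·1^m` falls into a part in the rows `i ≤ m`, to the
right of column `κ₁`, and a part in the rows below, inside the first `min(κ₁, κ₂)` columns.
Column `c` of the lower part and column `κ₁ + κ₂ + 1 - c` of the upper part have `n` boxes together.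
Put `i` into every box of row `i ≤ m`, and number each lower column upwards from its last box by
`n, n - 1, …`. Then each such pair of columns contains every symbol `1, …, n` exactly once, and
within a pair the symbol `k` lies in a higher row than `k + 1`, which gives both the weight and the
lattice condition.

This tableau is the largest one: in any Littlewood–Richardson tableau the entries of row `i` are at
most `i`, and an entry with `d` boxes below it in its column is at most `n - d`. As the weight
determines the sum of all entries, a tableau dominated by another one is equal to it.
-/

section Partition

variable {r : ℕ} {lam : ℕ → ℕ}

lemma IsPartitionOfLength.apply_le_apply (hlam : IsPartitionOfLength r lam) {a b : ℕ} (ha : 1 ≤ a)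
    (hab : a ≤ b) : lam b ≤ lam a :=
  antitoneOn_nat_Ici_of_succ_le hlam.1 ha (ha.trans hab) hab

/-- For `j ≥ 1`, the length of the `j`-th column of a partition `lam` of length at most `r`, i.e.
the part `λ'_j` of the conjugate partition, encoded as the last row `k ≤ r` with `j ≤ lam k`. -/
def columnLength (r : ℕ) (lam : ℕ → ℕ) (j : ℕ) : ℕ :=
  Nat.findGreatest (fun k => j ≤ lam k) r

lemma columnLength_le (r : ℕ) (lam : ℕ → ℕ) (j : ℕ) : columnLength r lam j ≤ r :=
  Nat.findGreatest_le r

lemma columnLength_antitone (r : ℕ) (lam : ℕ → ℕ) : Antitone (columnLength r lam) :=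
  fun _ _ hab => Nat.findGreatest_mono_left (fun _ => hab.trans) r

lemma IsPartitionOfLength.le_columnLength_iff (hlam : IsPartitionOfLength r lam) {i j : ℕ}
    (hi : 1 ≤ i) (hj : 1 ≤ j) : i ≤ columnLength r lam j ↔ j ≤ lam i := by
  refine ⟨fun h => ?_, fun h => ?_⟩
  · have hlast : j ≤ lam (columnLength r lam j) :=
      Nat.findGreatest_of_ne_zero (P := fun k => j ≤ lam k) rfl (by lia)
    exact hlast.trans (hlam.apply_le_apply hi h)
  · have hir : i ≤ r := by
      by_contra! hri
      have := hlam.2 i hri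
      lia
    exact Nat.le_findGreatest hir h

end Partition

section Shape

variable {lam : ℕ → ℕ}

lemma finite_readingPrefix (lam mu : ℕ → ℕ) (i j : ℕ) : (ReadingPrefix lam mu i j).Finite := by
  refine ((Set.finite_Iic i).biUnion fun a _ =>
    (Set.finite_Iic (lam a)).image (Prod.mk a)).subset ?_
  rintro ⟨a, b⟩ ⟨⟨-, -, hb⟩, hai⟩
  have ha : a ≤ i := hai.elim le_of_lt fun h => h.1.le
  simpa [ha] using hb

lemma IsPartitionOfLength.finite_inShape {r : ℕ} (hlam : IsPartitionOfLength r lam)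
    (mu : ℕ → ℕ) : {p | InShape lam mu p}.Finite := by
  refine (finite_readingPrefix lam mu (r + 1) 0).subset fun p hp => ⟨hp, Or.inl ?_⟩
  by_contra! hr
  have := hlam.2 p.1 hr
  have := hp.2
  lia

lemma inShape_onesPart_of_le {a k i j : ℕ} (hik : i ≤ k) :
    InShape lam (onesPart a k) (i, j) ↔ 1 ≤ i ∧ a < j ∧ j ≤ lam i := by
  simp +contextual [InShape, onesPart, hik]

lemma inShape_onesPart_of_lt {a k i j : ℕ} (hki : k < i) :
    InShape lam (onesPart a k) (i, j) ↔ 1 ≤ j ∧ j ≤ lam i := by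
  simp [InShape, onesPart, hki.not_ge, Nat.one_le_of_lt hki, Nat.one_le_iff_ne_zero,
    Nat.pos_iff_ne_zero]

end Shape

namespace IsLRTableau

variable {lam mu nu : ℕ → ℕ} {s : ℕ} {T T' : ℕ × ℕ → ℕ}

lemma row_mono (hT : IsLRTableau lam mu nu s T) {i j j' : ℕ} (hj : InShape lam mu (i, j))
    (hj' : InShape lam mu (i, j')) (hjj' : j ≤ j') : T (i, j) ≤ T (i, j') := by
  obtain ⟨-, -, row_le, -⟩ := hT
  induction j', hjj' using Nat.le_induction with
  | base => exact le_rfl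
  | succ b hjb ih =>
    have hb : InShape lam mu (i, b) :=
      ⟨hj.1, hj.2.1.trans_le hjb, (Nat.le_succ b).trans hj'.2.2⟩
    exact (ih hb).trans (row_le i b hb hj')

lemma add_le_of_column (hT : IsLRTableau lam mu nu s T) {i j d : ℕ}
    (hcol : ∀ e ≤ d, InShape lam mu (i + e, j)) : T (i, j) + d ≤ T (i + d, j) := by
  obtain ⟨-, -, -, col_lt, -⟩ := hT
  induction d with
  | zero => exact le_rfl
  | succ d ih =>
    have hd := ih fun e he => hcol e (by lia)
    have hlt := col_lt (i + d) j (hcol d (by lia)) (hcol (d + 1) le_rfl)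
    rw [← add_assoc i]
    lia

-- The rightmost box of row `i` is read first in its row. If its entry were `k + 1 > i`, then
-- at that point no `k` would have been read, since the rows above only have entries `< i`.
lemma le_row_index (hT : IsLRTableau lam mu nu s T) {i j : ℕ} (hij : InShape lam mu (i, j)) :
    T (i, j) ≤ i := by
  induction i using Nat.strong_induction_on generalizing j with
  | _ i ih =>
    have hend : InShape lam mu (i, lam i) := ⟨hij.1, hij.2.1.trans_le hij.2.2, le_rfl⟩
    refine (hT.row_mono hij hend hij.2.2).trans ?_
    by_contra! hlt
    obtain ⟨k, hk⟩ := Nat.exists_eq_add_one_of_ne_zero (Nat.ne_zero_of_lt hlt)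
    have hi : 1 ≤ i := hij.1
    have hnone : {p | p ∈ ReadingPrefix lam mu i (lam i) ∧ T p = k} = ∅ := by
      rw [Set.eq_empty_iff_forall_notMem]
      rintro ⟨a, b⟩ ⟨⟨hab, hread⟩, hTk⟩
      rcases hread with hai | ⟨rfl, hb⟩
      · have := ih a hai hab
        lia
      · obtain rfl : b = lam a := le_antisymm hab.2.2 hb
        lia
    have hsome : 0 < {p | p ∈ ReadingPrefix lam mu i (lam i) ∧ T p = k + 1}.ncard :=
      (Set.ncard_pos ((finite_readingPrefix lam mu i (lam i)).subset fun _ hp => hp.1)).2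
        ⟨(i, lam i), ⟨hend, Or.inr ⟨rfl, le_rfl⟩⟩, hk⟩
    have hlattice := hT.2.2.2.2.2 i (lam i) k (by lia)
    rw [hnone, Set.ncard_empty] at hlattice
    lia

lemma sum_eq (hT : IsLRTableau lam mu nu s T) (hfin : {p | InShape lam mu p}.Finite) :
    ∑ p ∈ hfin.toFinset, T p = ∑ k ∈ Finset.Icc 1 s, nu k * k := by
  obtain ⟨range, -, -, -, weight, -⟩ := hT
  have hmaps : ∀ p ∈ hfin.toFinset, T p ∈ Finset.Icc 1 s := fun p hp =>
    Finset.mem_Icc.2 (range p (hfin.mem_toFinset.1 hp))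
  rw [← Finset.sum_fiberwise_of_maps_to hmaps]
  refine Finset.sum_congr rfl fun k hk => ?_
  obtain ⟨hk1, hks⟩ := Finset.mem_Icc.1 hk
  have hcard : (hfin.toFinset.filter fun p => T p = k).card = nu k := by
    rw [← weight k hk1 hks, ← Set.ncard_coe_finset]
    simp only [Finset.coe_filter, Set.Finite.mem_toFinset, Set.mem_ofPred_eq]
  rw [Finset.sum_congr rfl fun p hp => (Finset.mem_filter.1 hp).2, Finset.sum_const, hcard,
    smul_eq_mul]

lemma eq_of_le (hT : IsLRTableau lam mu nu s T) (hT' : IsLRTableau lam mu nu s T')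
    (hfin : {p | InShape lam mu p}.Finite) (hle : ∀ p, InShape lam mu p → T p ≤ T' p) :
    T = T' := by
  have heq := (Finset.sum_eq_sum_iff_of_le fun p hp => hle p (hfin.mem_toFinset.1 hp)).1
    ((hT.sum_eq hfin).trans (hT'.sum_eq hfin).symm)
  funext p
  by_cases hp : InShape lam mu p
  · exact heq p (hfin.mem_toFinset.2 hp)
  · rw [hT.2.1 p hp, hT'.2.1 p hp]

lemma lrCoeff_eq_one_of_forall_le (hT' : IsLRTableau lam mu nu s T') (hsub : ∀ i, mu i ≤ lam i)
    (hfin : {p | InShape lam mu p}.Finite)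
    (hmax : ∀ T, IsLRTableau lam mu nu s T → ∀ p, InShape lam mu p → T p ≤ T' p) :
    LRCoeff lam mu nu s = 1 := by
  rw [LRCoeff, if_pos hsub, Set.ncard_eq_one]
  refine ⟨T', Set.eq_singleton_iff_unique_mem.2 ⟨hT', fun T hT => ?_⟩⟩
  exact hT.eq_of_le hT' hfin (hmax T hT)

end IsLRTableau

/-- The partitions `lam` indexing the nonzero Littlewood–Richardson coefficients of the rectangles
`κ₁·1^m` and `κ₂·1^n`: rows `j` and `m + n + 1 - j` are complementary for `j ≤ n`, the rows in
between have length `κ₁`, and row `n` is at least as long as the rows of both rectangles. -/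
structure IsRectProductShape (m n κ₁ κ₂ : ℕ) (lam : ℕ → ℕ) : Prop where
  one_le : 1 ≤ n
  le : n ≤ m
  isPartition : IsPartitionOfLength (m + n) lam
  pair : ∀ j, 1 ≤ j → j ≤ n → lam j + lam (m + n + 1 - j) = κ₁ + κ₂
  mid : ∀ j, 1 ≤ j → j ≤ m - n → lam (n + j) = κ₁
  fst_le : κ₁ ≤ lam n
  snd_le : κ₂ ≤ lam n

/-- The entries of the canonical tableau: `i` in the rows `i ≤ m`, while each column is numbered
upwards from its last box by `n, n - 1, …` in the rows below. -/
def canonicalEntry (m n : ℕ) (lam : ℕ → ℕ) (p : ℕ × ℕ) : ℕ :=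
  if p.1 ≤ m then p.1 else p.1 + n - columnLength (m + n) lam p.2

/-- The canonical, and only, Littlewood–Richardson tableau of shape `λ ∖ κ₁·1^m` and weight
`κ₂·1^n`: the filling by `canonicalEntry`, extended by `0` outside of the shape. -/
noncomputable def canonicalTableau (m n κ₁ : ℕ) (lam : ℕ → ℕ) : ℕ × ℕ → ℕ :=
  {p | InShape lam (onesPart κ₁ m) p}.indicator (canonicalEntry m n lam)

/-- The box containing the symbol `k` of the canonical tableau in the pair formed by column `c`
below row `m` and column `κ₁ + κ₂ + 1 - c` above it. -/
def symbolBox (m n κ₁ κ₂ : ℕ) (lam : ℕ → ℕ) (k c : ℕ) : ℕ × ℕ :=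
  if k + columnLength (m + n) lam c ≤ m + n then (k, κ₁ + κ₂ + 1 - c)
  else (k + columnLength (m + n) lam c - n, c)

lemma canonicalTableau_of_inShape {m n κ₁ : ℕ} {lam : ℕ → ℕ} {p : ℕ × ℕ}
    (hp : InShape lam (onesPart κ₁ m) p) :
    canonicalTableau m n κ₁ lam p = canonicalEntry m n lam p :=
  Set.indicator_of_mem (s := {p | InShape lam (onesPart κ₁ m) p}) hp _

lemma canonicalTableau_of_not_inShape {m n κ₁ : ℕ} {lam : ℕ → ℕ} {p : ℕ × ℕ}
    (hp : ¬ InShape lam (onesPart κ₁ m) p) : canonicalTableau m n κ₁ lam p = 0 :=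
  Set.indicator_of_notMem (s := {p | InShape lam (onesPart κ₁ m) p}) hp _

lemma canonicalEntry_le_succ_column (m n : ℕ) (lam : ℕ → ℕ) (i j : ℕ) :
    canonicalEntry m n lam (i, j) ≤ canonicalEntry m n lam (i, j + 1) := by
  have hcol := columnLength_antitone (m + n) lam (Nat.le_succ j)
  unfold canonicalEntry
  split_ifs
  · exact le_rfl
  · exact Nat.sub_le_sub_left hcol _

lemma symbolBox_injOn (m n κ₁ κ₂ : ℕ) (lam : ℕ → ℕ) {k : ℕ} (hkm : k ≤ m) :
    Set.InjOn (symbolBox m n κ₁ κ₂ lam k) (Set.Icc 1 κ₂) := by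
  intro a ha b hb hab
  simp only [Set.mem_Icc] at ha hb
  simp only [symbolBox] at hab
  split_ifs at hab <;> simp only [Prod.mk.injEq] at hab <;> lia

lemma symbolBox_fst_lt_succ (κ₁ κ₂ : ℕ) (lam : ℕ → ℕ) {m n k : ℕ} (hkm : k ≤ m) (c : ℕ) :
    (symbolBox m n κ₁ κ₂ lam k c).1 < (symbolBox m n κ₁ κ₂ lam (k + 1) c).1 := by
  unfold symbolBox
  split_ifs <;> simp only <;> lia

namespace IsRectProductShape

variable {m n κ₁ κ₂ : ℕ} {lam : ℕ → ℕ}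

lemma apply_eq_of_lt_of_le (h : IsRectProductShape m n κ₁ κ₂ lam) {i : ℕ} (hni : n < i)
    (him : i ≤ m) : lam i = κ₁ := by
  simpa [Nat.add_sub_cancel' hni.le] using h.mid (i - n) (by lia) (by lia)

lemma apply_add_apply_succ (h : IsRectProductShape m n κ₁ κ₂ lam) :
    lam n + lam (m + 1) = κ₁ + κ₂ := by
  simpa [show m + n + 1 - n = m + 1 by lia] using h.pair n h.one_le le_rfl

lemma onesPart_le (h : IsRectProductShape m n κ₁ κ₂ lam) (i : ℕ) : onesPart κ₁ m i ≤ lam i := by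
  unfold onesPart
  split_ifs with hi
  · rcases le_or_gt i n with hin | hni
    · exact h.fst_le.trans (h.isPartition.apply_le_apply hi.1 hin)
    · exact (h.apply_eq_of_lt_of_le hni hi.2).ge
  · exact Nat.zero_le _

lemma bounds_of_inShape_of_le (h : IsRectProductShape m n κ₁ κ₂ lam) {i j : ℕ} (him : i ≤ m)
    (hij : InShape lam (onesPart κ₁ m) (i, j)) : i ≤ n ∧ κ₁ < j ∧ j ≤ κ₁ + κ₂ := by
  obtain ⟨hi, hj, hji⟩ := (inShape_onesPart_of_le him).1 hij
  have hin : i ≤ n := by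
    by_contra! hni
    have := h.apply_eq_of_lt_of_le hni him
    lia
  have := h.pair i hi hin
  lia

lemma bounds_of_inShape_of_lt (h : IsRectProductShape m n κ₁ κ₂ lam) {i j : ℕ} (hmi : m < i)
    (hij : InShape lam (onesPart κ₁ m) (i, j)) :
    1 ≤ j ∧ j ≤ κ₁ ∧ j ≤ κ₂ ∧ i ≤ columnLength (m + n) lam j := by
  obtain ⟨hj, hji⟩ := (inShape_onesPart_of_lt hmi).1 hij
  have hrow : lam i ≤ lam (m + 1) := h.isPartition.apply_le_apply (by lia) hmi
  have hsum := h.apply_add_apply_succ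
  have hfst := h.fst_le
  have hsnd := h.snd_le
  refine ⟨hj, by lia, by lia, (h.isPartition.le_columnLength_iff (by lia) hj).2 hji⟩

lemma add_columnLength_le_iff (h : IsRectProductShape m n κ₁ κ₂ lam) {k c : ℕ} (hk : 1 ≤ k)
    (hkn : k ≤ n) (hc : 1 ≤ c) :
    k + columnLength (m + n) lam c ≤ m + n ↔ κ₁ + κ₂ + 1 - c ≤ lam k := by
  have hpair := h.pair k hk hkn
  have hcol := h.isPartition.le_columnLength_iff (i := m + n + 1 - k) (by lia) hc
  lia

lemma symbolBox_spec (h : IsRectProductShape m n κ₁ κ₂ lam) {k c : ℕ} (hk : 1 ≤ k)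
    (hkn : k ≤ n) (hc : c ∈ Set.Icc 1 κ₂) :
    InShape lam (onesPart κ₁ m) (symbolBox m n κ₁ κ₂ lam k c) ∧
      canonicalEntry m n lam (symbolBox m n κ₁ κ₂ lam k c) = k := by
  obtain ⟨hc1, hcκ⟩ := hc
  have hkm : k ≤ m := hkn.trans h.le
  unfold symbolBox
  split_ifs with hupper
  · have hrow := (h.add_columnLength_le_iff hk hkn hc1).1 hupper
    exact ⟨(inShape_onesPart_of_le hkm).2 ⟨hk, by lia, hrow⟩, if_pos hkm⟩
  · have hm : m < k + columnLength (m + n) lam c - n := by lia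
    have hcol : c ≤ lam (k + columnLength (m + n) lam c - n) :=
      (h.isPartition.le_columnLength_iff (by lia) hc1).1 (by lia)
    refine ⟨(inShape_onesPart_of_lt hm).2 ⟨hc1, hcol⟩, ?_⟩
    rw [canonicalEntry, if_neg hm.not_ge]
    lia

lemma exists_symbolBox_eq (h : IsRectProductShape m n κ₁ κ₂ lam) {p : ℕ × ℕ}
    (hp : InShape lam (onesPart κ₁ m) p) :
    ∃ c ∈ Set.Icc 1 κ₂, symbolBox m n κ₁ κ₂ lam (canonicalEntry m n lam p) c = p := by
  obtain ⟨i, j⟩ := p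
  rcases le_or_gt i m with him | hmi
  · obtain ⟨hin, hj, hjκ⟩ := h.bounds_of_inShape_of_le him hp
    have hcol : i + columnLength (m + n) lam (κ₁ + κ₂ + 1 - j) ≤ m + n :=
      (h.add_columnLength_le_iff hp.1 hin (by lia)).2
        (by rw [Nat.sub_sub_self (by lia)]; exact hp.2.2)
    refine ⟨κ₁ + κ₂ + 1 - j, ⟨by lia, by lia⟩, ?_⟩
    rw [canonicalEntry, if_pos him, symbolBox, if_pos hcol, Nat.sub_sub_self (by lia)]
  · obtain ⟨hj, -, hjκ, -⟩ := h.bounds_of_inShape_of_lt hmi hp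
    refine ⟨j, ⟨hj, hjκ⟩, ?_⟩
    have := columnLength_le (m + n) lam j
    rw [canonicalEntry, if_neg hmi.not_ge, symbolBox, if_neg (by lia)]
    exact Prod.ext (by lia) rfl

lemma canonicalEntry_mem_Icc (h : IsRectProductShape m n κ₁ κ₂ lam) {p : ℕ × ℕ}
    (hp : InShape lam (onesPart κ₁ m) p) : canonicalEntry m n lam p ∈ Set.Icc 1 n := by
  obtain ⟨i, j⟩ := p
  unfold canonicalEntry
  split_ifs with him
  · exact ⟨hp.1, (h.bounds_of_inShape_of_le him hp).1⟩
  · have := (h.bounds_of_inShape_of_lt (not_le.1 him) hp).2.2.2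
    have := columnLength_le (m + n) lam j
    exact ⟨by lia, by lia⟩

lemma canonicalEntry_lt_succ_row (h : IsRectProductShape m n κ₁ κ₂ lam) {i j : ℕ}
    (hij : InShape lam (onesPart κ₁ m) (i, j)) (hij' : InShape lam (onesPart κ₁ m) (i + 1, j)) :
    canonicalEntry m n lam (i, j) < canonicalEntry m n lam (i + 1, j) := by
  rcases lt_trichotomy i m with him | rfl | hmi
  · rw [canonicalEntry, canonicalEntry, if_pos him.le, if_pos (Nat.succ_le_of_lt him)]
    exact Nat.lt_succ_self i
  · have := (h.bounds_of_inShape_of_le le_rfl hij).2.1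
    have := (h.bounds_of_inShape_of_lt (Nat.lt_succ_self _) hij').2.1
    lia
  · have := columnLength_le (m + n) lam j
    rw [canonicalEntry, canonicalEntry, if_neg hmi.not_ge, if_neg (by lia)]
    lia

lemma ncard_canonicalTableau_eq (h : IsRectProductShape m n κ₁ κ₂ lam) {k : ℕ} (hk : 1 ≤ k)
    (hkn : k ≤ n) {S : Set (ℕ × ℕ)} (hS : ∀ p ∈ S, InShape lam (onesPart κ₁ m) p) :
    {p | p ∈ S ∧ canonicalTableau m n κ₁ lam p = k}.ncard =
      {c | c ∈ Set.Icc 1 κ₂ ∧ symbolBox m n κ₁ κ₂ lam k c ∈ S}.ncard := by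
  have himage : {p | p ∈ S ∧ canonicalTableau m n κ₁ lam p = k} =
      symbolBox m n κ₁ κ₂ lam k ''
        {c | c ∈ Set.Icc 1 κ₂ ∧ symbolBox m n κ₁ κ₂ lam k c ∈ S} := by
    ext p
    constructor
    · rintro ⟨hp, hpk⟩
      rw [canonicalTableau_of_inShape (hS p hp)] at hpk
      obtain ⟨c, hc, hcp⟩ := h.exists_symbolBox_eq (hS p hp)
      rw [hpk] at hcp
      exact ⟨c, ⟨hc, hcp ▸ hp⟩, hcp⟩
    · rintro ⟨c, ⟨hc, hcS⟩, rfl⟩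
      exact ⟨hcS, (canonicalTableau_of_inShape (hS _ hcS)).trans (h.symbolBox_spec hk hkn hc).2⟩
  have hinj := (symbolBox_injOn m n κ₁ κ₂ lam (hkn.trans h.le)).mono
    (s₁ := {c | c ∈ Set.Icc 1 κ₂ ∧ symbolBox m n κ₁ κ₂ lam k c ∈ S}) fun c hc => hc.1
  rw [himage, hinj.ncard_image]

lemma ncard_canonicalTableau_weight (h : IsRectProductShape m n κ₁ κ₂ lam) {k : ℕ} (hk : 1 ≤ k)
    (hkn : k ≤ n) :
    {p | InShape lam (onesPart κ₁ m) p ∧ canonicalTableau m n κ₁ lam p = k}.ncard = κ₂ := by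
  have hall : {c | c ∈ Set.Icc 1 κ₂ ∧ InShape lam (onesPart κ₁ m) (symbolBox m n κ₁ κ₂ lam k c)} =
      Set.Icc 1 κ₂ :=
    Set.sep_eq_self_iff_mem_true.2 fun c hc => (h.symbolBox_spec hk hkn hc).1
  refine (h.ncard_canonicalTableau_eq hk hkn fun p hp => hp).trans ?_
  exact (congrArg Set.ncard hall).trans (by simp)

lemma ncard_canonicalTableau_lattice (h : IsRectProductShape m n κ₁ κ₂ lam) (i j : ℕ) {k : ℕ}
    (hk : 1 ≤ k) :
    {p | p ∈ ReadingPrefix lam (onesPart κ₁ m) i j ∧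
        canonicalTableau m n κ₁ lam p = k + 1}.ncard ≤
      {p | p ∈ ReadingPrefix lam (onesPart κ₁ m) i j ∧
        canonicalTableau m n κ₁ lam p = k}.ncard := by
  rcases le_or_gt (k + 1) n with hkn | hnk
  · have hkn' : k ≤ n := (Nat.le_succ k).trans hkn
    rw [h.ncard_canonicalTableau_eq (Nat.le_add_left 1 k) hkn fun _ hp => hp.1,
      h.ncard_canonicalTableau_eq hk hkn' fun _ hp => hp.1]
    refine Set.ncard_le_ncard ?_ ((Set.finite_Icc 1 κ₂).subset fun c hc => hc.1)
    rintro c ⟨hc, -, hread⟩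
    have habove := symbolBox_fst_lt_succ κ₁ κ₂ lam (n := n) (hkn'.trans h.le) c
    exact ⟨hc, (h.symbolBox_spec hk hkn' hc).1,
      Or.inl (habove.trans_le (hread.elim le_of_lt fun hi => hi.1.le))⟩
  · have hnone : {p | p ∈ ReadingPrefix lam (onesPart κ₁ m) i j ∧
        canonicalTableau m n κ₁ lam p = k + 1} = ∅ := by
      rw [Set.eq_empty_iff_forall_notMem]
      rintro p ⟨⟨hp, -⟩, hpk⟩
      rw [canonicalTableau_of_inShape hp] at hpk
      have := (h.canonicalEntry_mem_Icc hp).2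
      lia
    rw [hnone, Set.ncard_empty]
    exact Nat.zero_le _

lemma isLRTableau_canonicalTableau (h : IsRectProductShape m n κ₁ κ₂ lam) :
    IsLRTableau lam (onesPart κ₁ m) (onesPart κ₂ n) n (canonicalTableau m n κ₁ lam) := by
  refine ⟨fun p hp => ?_, fun p hp => canonicalTableau_of_not_inShape hp,
    fun i j hij hij' => ?_, fun i j hij hij' => ?_, fun k hk hkn => ?_,
    fun i j k hk => h.ncard_canonicalTableau_lattice i j hk⟩
  · rw [canonicalTableau_of_inShape hp]
    exact h.canonicalEntry_mem_Icc hp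
  · rw [canonicalTableau_of_inShape hij, canonicalTableau_of_inShape hij']
    exact canonicalEntry_le_succ_column m n lam i j
  · rw [canonicalTableau_of_inShape hij, canonicalTableau_of_inShape hij']
    exact h.canonicalEntry_lt_succ_row hij hij'
  · rw [h.ncard_canonicalTableau_weight hk hkn, onesPart, if_pos ⟨hk, hkn⟩]

lemma le_canonicalTableau (h : IsRectProductShape m n κ₁ κ₂ lam) {nu : ℕ → ℕ} {T : ℕ × ℕ → ℕ}
    (hT : IsLRTableau lam (onesPart κ₁ m) nu n T) {p : ℕ × ℕ}
    (hp : InShape lam (onesPart κ₁ m) p) : T p ≤ canonicalTableau m n κ₁ lam p := by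
  obtain ⟨i, j⟩ := p
  rw [canonicalTableau_of_inShape hp, canonicalEntry]
  split_ifs with him
  · exact hT.le_row_index hp
  · have hmi : m < i := not_le.1 him
    obtain ⟨hj, -, -, hij⟩ := h.bounds_of_inShape_of_lt hmi hp
    obtain ⟨d, hd⟩ := Nat.exists_eq_add_of_le hij
    have hcol : ∀ e ≤ d, InShape lam (onesPart κ₁ m) (i + e, j) := fun e he =>
      (inShape_onesPart_of_lt (by lia)).2
        ⟨hj, (h.isPartition.le_columnLength_iff (by lia) hj).1 (by lia)⟩
    have hlast : T (i + d, j) ≤ n := (hT.1 _ (hcol d le_rfl)).2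
    have := hT.add_le_of_column hcol
    lia

end IsRectProductShape

theorem lr_shape_implies_coeff_one_general {m n κ₁ κ₂ : ℕ} {lam : ℕ → ℕ}
    (h : IsRectProductShape m n κ₁ κ₂ lam) :
    LRCoeff lam (onesPart κ₁ m) (onesPart κ₂ n) n = 1 :=
  h.isLRTableau_canonicalTableau.lrCoeff_eq_one_of_forall_le h.onesPart_le
    (h.isPartition.finite_inShape _) fun _ hT _ hp => h.le_canonicalTableau hT hp

/-- If `m ≥ n ≥ 1`, `κ₁ ≥ κ₂ ≥ 0` and the partition `λ` of length at most
`m + n` satisfies `λ_j + λ_{m+n+1−j} = κ₁ + κ₂` for `j = 1, …, n`,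
`λ_{n+j} = κ₁` for `j = 1, …, m−n`, and `λ_n ≥ κ₁`, then the
Littlewood–Richardson coefficient `c^λ_{κ₁·1^m, κ₂·1^n}` equals `1`. -/
theorem lr_shape_implies_coeff_one (m n κ₁ κ₂ : ℕ) (hn : 1 ≤ n) (hmn : n ≤ m)
    (hκ : κ₂ ≤ κ₁) (lam : ℕ → ℕ) (hlam : IsPartitionOfLength (m + n) lam)
    (hpair : ∀ j, 1 ≤ j → j ≤ n → lam j + lam (m + n + 1 - j) = κ₁ + κ₂)
    (hmid : ∀ j, 1 ≤ j → j ≤ m - n → lam (n + j) = κ₁)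
    (hlast : κ₁ ≤ lam n) :
    LRCoeff lam (onesPart κ₁ m) (onesPart κ₂ n) n = 1 :=
  lr_shape_implies_coeff_one_general ⟨hn, hmn, hlam, hpair, hmid, hlast, hκ.trans hlast⟩
end
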